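/- Let F be a number field with F⁻ ≠ {0}. Then every CM subfield K of F satisfies K ⊆ F⁺ + F⁻; hence F⁺ + F⁻ is the maximal CM subfield of F. -/

import Mathlib

/-- The set `F⁺` of elements of `F` all of whose complex embeddings are real,
as a `ℚ`-subspace of `F`. -/
def Fplus (F : Type*) [Field F] [NumberField F] : Submodule ℚ F where
  carrier := {x | ∀ σ : F →+* ℂ, σ x = starRingEnd ℂ (σ x)}
  add_mem' := by
    intro a b ha hb σ
    simp only [map_add]
    linear_combination ha σ + hb σ
  zero_mem' := by intro σ; simp
  smul_mem' := by
    intro q x hx σ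
    simp only [Rat.smul_def, map_mul, map_ratCast]
    linear_combination (q : ℂ) * hx σ

/-- The set `F⁻` of elements of `F` all of whose complex embeddings are purely
imaginary, as a `ℚ`-subspace of `F`. -/
def Fminus (F : Type*) [Field F] [NumberField F] : Submodule ℚ F where
  carrier := {x | ∀ σ : F →+* ℂ, σ x = - starRingEnd ℂ (σ x)}
  add_mem' := by
    intro a b ha hb σ
    simp only [map_add]
    linear_combination ha σ + hb σ
  zero_mem' := by intro σ; simp
  smul_mem' := by
    intro q x hx σ
    simp only [Rat.smul_def, map_mul, map_ratCast]
    linear_combination (q : ℂ) * hx σ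

/-- A field is totally real if every ring embedding into `ℂ` has image
contained in `ℝ`. -/
def IsTotallyRealField (K : Type*) [Field K] : Prop :=
  ∀ (σ : K →+* ℂ) (x : K), (σ x).im = 0

/-- A field is CM if no ring embedding into `ℂ` has image contained in `ℝ`,
and it is a degree-2 extension of a totally real subfield. -/
def IsCMField (K : Type*) [Field K] : Prop :=
  (∀ σ : K →+* ℂ, ∃ x : K, (σ x).im ≠ 0) ∧
  ∃ k : Subfield K, IsTotallyRealField k ∧ Module.finrank k K = 2

/-! An element `x` lies in `F⁺ + F⁻` exactly when some `x' ∈ F` satisfies `σ x' = conj (σ x)` for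
all `σ : F → ℂ`, a condition stable under the field operations. A CM field carries such a
conjugation on all of itself, so it is the sum of its real and its purely imaginary elements.
Conversely, if `K = K⁺ + K⁻` and `0 ≠ a ∈ K⁻`, then `a` is not real under any embedding and
`K = K⁺ ⊕ K⁺ a`, so `K` is CM. As every embedding of a subfield `K` of `F` extends to `F`, the
spaces `K⁺` and `K⁻` are the intersections of `K` with `F⁺` and `F⁻`. -/

open scoped ComplexConjugate

section Comparison

variable {K : Type*} [Field K]

theorem isTotallyRealField_iff : IsTotallyRealField K ↔ NumberField.IsTotallyReal K := by
  refine ⟨fun hK => ⟨fun v => ?_⟩, fun hK σ x => ?_⟩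
  · rw [NumberField.InfinitePlace.isReal_iff, NumberField.ComplexEmbedding.isReal_iff]
    exact RingHom.ext fun x => Complex.conj_eq_iff_im.mpr (hK v.embedding x)
  · exact Complex.conj_eq_iff_im.mp
      (RingHom.congr_fun (hK.complexEmbedding_isReal σ) x)

theorem isTotallyComplex_iff_forall_exists_im_ne_zero :
    NumberField.IsTotallyComplex K ↔ ∀ σ : K →+* ℂ, ∃ x : K, (σ x).im ≠ 0 := by
  have not_isReal_iff (σ : K →+* ℂ) :
      ¬ NumberField.ComplexEmbedding.IsReal σ ↔ ∃ x : K, (σ x).im ≠ 0 := by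
    simp only [NumberField.ComplexEmbedding.isReal_iff, RingHom.ext_iff,
      NumberField.ComplexEmbedding.conjugate_coe_eq, Complex.conj_eq_iff_im, not_forall]
  refine ⟨fun hK σ => (not_isReal_iff σ).mp (hK.complexEmbedding_not_isReal σ),
    fun hK => ⟨fun v => ?_⟩⟩
  rw [NumberField.InfinitePlace.isComplex_iff]
  exact (not_isReal_iff v.embedding).mpr (hK v.embedding)

theorem isCMField_iff [CharZero K] [Algebra.IsIntegral ℚ K] :
    IsCMField K ↔ NumberField.IsCMField K := by
  constructor
  · rintro ⟨hcomplex, k, hreal, hrank⟩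
    have := isTotallyComplex_iff_forall_exists_im_ne_zero.mpr hcomplex
    have := isTotallyRealField_iff.mp hreal
    have : Algebra.IsQuadraticExtension k K := ⟨hrank⟩
    exact NumberField.IsCMField.ofCMExtension k K
  · intro _
    exact ⟨isTotallyComplex_iff_forall_exists_im_ne_zero.mp inferInstance,
      NumberField.maximalRealSubfield K, isTotallyRealField_iff.mpr inferInstance,
      Algebra.IsQuadraticExtension.finrank_eq_two _ K⟩

end Comparison

section RealAndImaginaryParts

variable {F : Type*} [Field F] [NumberField F] {x y : F}

theorem mem_Fplus_iff : x ∈ Fplus F ↔ ∀ σ : F →+* ℂ, conj (σ x) = σ x :=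
  forall_congr' fun _ => eq_comm

theorem mem_Fminus_iff : x ∈ Fminus F ↔ ∀ σ : F →+* ℂ, conj (σ x) = -σ x :=
  forall_congr' fun _ => eq_comm.trans neg_eq_iff_eq_neg

theorem mem_Fplus_iff_mem_maximalRealSubfield :
    x ∈ Fplus F ↔ x ∈ NumberField.maximalRealSubfield F :=
  mem_Fplus_iff

theorem conj_map_ne_of_mem_Fminus (hx : x ∈ Fminus F) (hx0 : x ≠ 0) (σ : F →+* ℂ) :
    conj (σ x) ≠ σ x := by
  rw [mem_Fminus_iff.mp hx σ, ne_eq, neg_eq_self]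
  exact (map_ne_zero σ).mpr hx0

theorem div_mem_Fplus_of_mem_Fminus (hx : x ∈ Fminus F) (hy : y ∈ Fminus F) :
    x / y ∈ Fplus F := by
  refine mem_Fplus_iff.mpr fun σ => ?_
  simp only [map_div₀, mem_Fminus_iff.mp hx σ, mem_Fminus_iff.mp hy σ, neg_div_neg_eq]

theorem mem_Fplus_add_Fminus_iff_exists_conj :
    x ∈ Fplus F + Fminus F ↔ ∃ x' : F, ∀ σ : F →+* ℂ, σ x' = conj (σ x) := by
  rw [Submodule.add_eq_sup, Submodule.mem_sup]
  constructor
  · rintro ⟨p, hp, m, hm, rfl⟩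
    refine ⟨p - m, fun σ => ?_⟩
    rw [map_sub, map_add, map_add, mem_Fplus_iff.mp hp, mem_Fminus_iff.mp hm, sub_eq_add_neg]
  · rintro ⟨x', hx'⟩
    have conj_conj (σ : F →+* ℂ) : conj (σ x') = σ x := by rw [hx', Complex.conj_conj]
    refine ⟨(x + x') / 2, mem_Fplus_iff.mpr fun σ => ?_,
      (x - x') / 2, mem_Fminus_iff.mpr fun σ => ?_, by ring⟩
    · simp only [map_div₀, map_add, map_ofNat, conj_conj, ← hx', add_comm]
    · simp only [map_div₀, map_sub, map_ofNat, conj_conj, ← hx']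
      ring

variable (F) in
/-- The set `F⁺ + F⁻` as a subfield of `F`: the largest CM subfield when `F⁻ ≠ 0`, and `F⁺`
otherwise. -/
def maximalCMSubfield : Subfield F where
  carrier := (Fplus F + Fminus F : Submodule ℚ F)
  zero_mem' := zero_mem _
  add_mem' := add_mem
  neg_mem' := neg_mem
  one_mem' := mem_Fplus_add_Fminus_iff_exists_conj.mpr ⟨1, fun σ => by simp only [map_one]⟩
  mul_mem' {x y} hx hy := by
    obtain ⟨x', hx'⟩ := mem_Fplus_add_Fminus_iff_exists_conj.mp hx
    obtain ⟨y', hy'⟩ := mem_Fplus_add_Fminus_iff_exists_conj.mp hy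
    exact mem_Fplus_add_Fminus_iff_exists_conj.mpr
      ⟨x' * y', fun σ => by simp only [map_mul, hx', hy']⟩
  inv_mem' x hx := by
    obtain ⟨x', hx'⟩ := mem_Fplus_add_Fminus_iff_exists_conj.mp hx
    exact mem_Fplus_add_Fminus_iff_exists_conj.mpr ⟨x'⁻¹, fun σ => by simp only [map_inv₀, hx']⟩

end RealAndImaginaryParts

section CMCriterion

variable {K : Type*} [Field K] [NumberField K]

theorem IsCMField.Fplus_add_Fminus_eq_top (hK : IsCMField K) : Fplus K + Fminus K = ⊤ := by
  have := isCMField_iff.mp hK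
  exact eq_top_iff.mpr fun x _ => mem_Fplus_add_Fminus_iff_exists_conj.mpr
    ⟨NumberField.IsCMField.complexConj K x,
      fun σ => NumberField.IsCMField.complexEmbedding_complexConj K σ x⟩

theorem isTotallyComplex_of_Fminus_ne_bot (hminus : Fminus K ≠ ⊥) :
    NumberField.IsTotallyComplex K := by
  obtain ⟨a, ha, ha0⟩ := Submodule.exists_mem_ne_zero_of_ne_bot hminus
  exact isTotallyComplex_iff_forall_exists_im_ne_zero.mpr fun σ =>
    ⟨a, fun him => conj_map_ne_of_mem_Fminus ha ha0 σ (Complex.conj_eq_iff_im.mpr him)⟩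

theorem finrank_maximalRealSubfield_eq_two (hminus : Fminus K ≠ ⊥)
    (htop : Fplus K + Fminus K = ⊤) :
    Module.finrank (NumberField.maximalRealSubfield K) K = 2 := by
  obtain ⟨a, ha, ha0⟩ := Submodule.exists_mem_ne_zero_of_ne_bot hminus
  have hindep : LinearIndependent (NumberField.maximalRealSubfield K) ![1, a] := by
    refine (LinearIndependent.pair_iff' one_ne_zero).mpr fun r hr => ?_
    have haplus : a ∈ Fplus K := by
      rw [← hr, Subfield.smul_def, smul_eq_mul, mul_one]
      exact mem_Fplus_iff_mem_maximalRealSubfield.mpr r.2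
    obtain ⟨σ⟩ : Nonempty (K →+* ℂ) := inferInstance
    exact conj_map_ne_of_mem_Fminus ha ha0 σ (mem_Fplus_iff.mp haplus σ)
  have hspan : Submodule.span (NumberField.maximalRealSubfield K) (Set.range ![1, a]) = ⊤ := by
    refine eq_top_iff.mpr fun z _ => ?_
    obtain ⟨p, hp, m, hm, rfl⟩ := Submodule.mem_sup.mp (htop ▸ Submodule.mem_top (x := z))
    have hma := div_mem_Fplus_of_mem_Fminus hm ha
    rw [Matrix.range_cons_cons_empty, Submodule.mem_span_pair]
    refine ⟨⟨p, mem_Fplus_iff_mem_maximalRealSubfield.mp hp⟩,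
      ⟨m / a, mem_Fplus_iff_mem_maximalRealSubfield.mp hma⟩, ?_⟩
    simp only [Subfield.smul_def, smul_eq_mul, mul_one, div_mul_cancel₀ m ha0]
  rw [← finrank_top, ← hspan, finrank_span_eq_card hindep, Fintype.card_fin]

theorem isCMField_of_Fplus_add_Fminus_eq_top (hminus : Fminus K ≠ ⊥)
    (htop : Fplus K + Fminus K = ⊤) : IsCMField K := by
  have := isTotallyComplex_of_Fminus_ne_bot hminus
  have : Algebra.IsQuadraticExtension (NumberField.maximalRealSubfield K) K :=
    ⟨finrank_maximalRealSubfield_eq_two hminus htop⟩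
  exact isCMField_iff.mpr ⟨⟩

end CMCriterion

section Extension

variable {K F : Type*} [Field K] [Field F] [Algebra K F] {x : K}

theorem forall_embedding_algebraMap_iff [Algebra.IsAlgebraic K F] (p : ℂ → Prop) :
    (∀ σ : F →+* ℂ, p (σ (algebraMap K F x))) ↔ ∀ τ : K →+* ℂ, p (τ x) := by
  refine ⟨fun h τ => ?_, fun h σ => h (σ.comp (algebraMap K F))⟩
  rw [← NumberField.ComplexEmbedding.lift_algebraMap_apply F τ x]
  exact h _

variable [NumberField K] [NumberField F]

theorem algebraMap_mem_Fplus_iff : algebraMap K F x ∈ Fplus F ↔ x ∈ Fplus K :=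
  forall_embedding_algebraMap_iff fun z => z = conj z

theorem algebraMap_mem_Fminus_iff : algebraMap K F x ∈ Fminus F ↔ x ∈ Fminus K :=
  forall_embedding_algebraMap_iff fun z => z = -conj z

end Extension

section MaximalCMSubfield

variable {F : Type*} [Field F] [NumberField F] {K : Subfield F}

theorem IsCMField.le_maximalCMSubfield (hK : IsCMField K) : K ≤ maximalCMSubfield F := by
  intro x hx
  obtain ⟨p, hp, m, hm, hpm⟩ := Submodule.mem_sup.mp
    (hK.Fplus_add_Fminus_eq_top ▸ Submodule.mem_top (x := (⟨x, hx⟩ : K)))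
  exact Submodule.mem_sup.mpr ⟨p, algebraMap_mem_Fplus_iff.mpr hp, m,
    algebraMap_mem_Fminus_iff.mpr hm, congrArg Subtype.val hpm⟩

theorem Fplus_add_Fminus_maximalCMSubfield_eq_top :
    Fplus (maximalCMSubfield F) + Fminus (maximalCMSubfield F) = ⊤ := by
  refine eq_top_iff.mpr fun x _ => ?_
  obtain ⟨p, hp, m, hm, hpm⟩ := Submodule.mem_sup.mp x.2
  exact Submodule.mem_sup.mpr
    ⟨⟨p, Submodule.mem_sup_left hp⟩, algebraMap_mem_Fplus_iff.mp hp,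
      ⟨m, Submodule.mem_sup_right hm⟩, algebraMap_mem_Fminus_iff.mp hm, Subtype.ext hpm⟩

theorem Fminus_maximalCMSubfield_ne_bot (h : Fminus F ≠ ⊥) : Fminus (maximalCMSubfield F) ≠ ⊥ := by
  obtain ⟨a, ha, ha0⟩ := Submodule.exists_mem_ne_zero_of_ne_bot h
  exact (Submodule.ne_bot_iff _).mpr
    ⟨⟨a, Submodule.mem_sup_right ha⟩, algebraMap_mem_Fminus_iff.mp ha,
      fun ha_zero => ha0 (congrArg Subtype.val ha_zero)⟩

theorem isCMField_maximalCMSubfield (h : Fminus F ≠ ⊥) : IsCMField (maximalCMSubfield F) :=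
  isCMField_of_Fplus_add_Fminus_eq_top (Fminus_maximalCMSubfield_ne_bot h)
    Fplus_add_Fminus_maximalCMSubfield_eq_top

end MaximalCMSubfield

/-- If `F⁻ ≠ {0}` then every CM subfield `K` of `F` satisfies
`K ⊆ F⁺ + F⁻`; hence `F⁺ + F⁻` is the maximal CM subfield of `F`. -/
theorem Fplus_add_Fminus_maximal_CM (F : Type*) [Field F] [NumberField F]
    (h : Fminus F ≠ ⊥) :
    (∀ K : Subfield F, IsCMField K →
      (K : Set F) ⊆ ((Fplus F + Fminus F : Submodule ℚ F) : Set F)) ∧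
    ∃ Kmax : Subfield F,
      (Kmax : Set F) = ((Fplus F + Fminus F : Submodule ℚ F) : Set F) ∧
      IsCMField Kmax ∧ ∀ K : Subfield F, IsCMField K → K ≤ Kmax := by
  exact ⟨fun K hK => hK.le_maximalCMSubfield,
    maximalCMSubfield F, rfl, isCMField_maximalCMSubfield h, fun K hK => hK.le_maximalCMSubfield⟩
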